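/- arXiv:2404.13891 — 2 statements merged into one kernel-verified Lean document; each statement's English description precedes it below -/
import Mathlib

section
/- Let T ≥ 1, let r¹, …, rᵀ ∈ ℝ^n and v¹, …, vᵀ ∈ ℝ^n, let w¹, …, wᵀ > 0 and τ¹, …, τᵀ > 0 be such that the sequence t ↦ τ^t/w^t is non-increasing, and let η > 0. Define z⁰ = 0 ∈ ℝ^n and, for 1 ≤ t ≤ T, z^t = [z^{t−1} + η w^t r^t]⁺ and x̃^t = [z^{t−1} + η w^t v^t]⁺. Then for every x̃′ in the standard simplex Δ^n: Σ_{t=1}^T (τ^t/w^t) ⟨−w^t r^t, x̃^t − x̃′⟩ ≤ η Σ_{t=1}^T (τ^t/w^t) ‖w^t r^t − w^t v^t‖₂² + (1/(2η))·(τ¹/w¹). -/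
open Finset

/-- Euclidean dot product on `Fin n → ℝ`. -/
def dotp {n : ℕ} (a b : Fin n → ℝ) : ℝ := ∑ i, a i * b i

/-- Componentwise positive part. -/
def clipPos {n : ℕ} (v : Fin n → ℝ) : Fin n → ℝ := fun i => max (v i) 0

/-!
With `Gᵗ = wᵗrᵗ` and `Mᵗ = wᵗvᵗ`, both `zᵗ` and `x̃ᵗ` are projections of steps from `zᵗ⁻¹` onto the
nonnegative orthant. Split `⟨Gᵗ, x' - x̃ᵗ⟩ = ⟨Gᵗ, x' - zᵗ⟩ + ⟨Mᵗ, zᵗ - x̃ᵗ⟩ + ⟨Gᵗ - Mᵗ, zᵗ - x̃ᵗ⟩`.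
The variational inequalities of the two projections bound the first two terms by differences of
squared distances, and Young's inequality bounds the third. What remains of the distances
telescopes; summation by parts against the non-increasing weights `τᵗ/wᵗ` leaves only
`(τ¹/w¹)‖x'‖²`, and `‖x'‖ ≤ 1` on the simplex.
-/

open scoped RealInnerProductSpace

section Projection

variable {E : Type*} [SeminormedAddCommGroup E] [InnerProductSpace ℝ E]

/-- `p` is the metric projection of `a` onto `K`, encoded by the variational inequality that
characterizes the nearest point when `K` is convex (`norm_eq_iInf_iff_real_inner_le_zero`). It
describes the iterates of mirror descent with the Euclidean regularizer. -/
structure IsProjectionOnto (K : Set E) (a p : E) : Prop where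
  mem : p ∈ K
  inner_le_zero : ∀ y ∈ K, ⟪a - p, y - p⟫ ≤ 0

variable {K : Set E} {z g m p x y : E}

theorem IsProjectionOnto.inner_step_le (hp : IsProjectionOnto K (z + g) p) (hy : y ∈ K) :
    ⟪g, y - p⟫ ≤ (‖z - y‖ ^ 2 - ‖p - y‖ ^ 2 - ‖p - z‖ ^ 2) / 2 := by
  have variational : ⟪g - (p - z), y - p⟫ ≤ 0 := by
    simpa only [sub_sub_eq_add_sub, add_comm g] using hp.inner_le_zero y hy
  have three_point : ‖z - y‖ ^ 2 = ‖p - y‖ ^ 2 + 2 * ⟪p - z, y - p⟫ + ‖p - z‖ ^ 2 := by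
    rw [show z - y = (p - y) - (p - z) by abel, norm_sub_sq_real, real_inner_comm,
      ← neg_sub p y, inner_neg_right]
    ring
  rw [inner_sub_left] at variational
  linarith

theorem real_inner_le_norm_sq_add_norm_sq_div_two (a b : E) : ⟪a, b⟫ ≤ (‖a‖ ^ 2 + ‖b‖ ^ 2) / 2 := by
  linarith [norm_sub_sq_real a b, sq_nonneg ‖a - b‖]

theorem IsProjectionOnto.regret_le (hp : IsProjectionOnto K (z + g) p)
    (hx : IsProjectionOnto K (z + m) x) (hy : y ∈ K) :
    ⟪-g, x - y⟫ ≤ (‖g - m‖ ^ 2 + ‖z - y‖ ^ 2 - ‖p - y‖ ^ 2) / 2 := by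
  have decomposition : ⟪-g, x - y⟫ = ⟪g, y - p⟫ + ⟪m, p - x⟫ + ⟪g - m, p - x⟫ := by
    simp only [inner_neg_left, inner_sub_left, inner_sub_right]
    ring
  have actual_step := hp.inner_step_le hy
  have predicted_step := hx.inner_step_le hp.mem
  rw [norm_sub_rev z p, norm_sub_rev x p] at predicted_step
  have young := real_inner_le_norm_sq_add_norm_sq_div_two (g - m) (p - x)
  linarith [sq_nonneg ‖x - z‖]

theorem IsProjectionOnto.regret_smul_le {η : ℝ} (hη : 0 < η)
    (hp : IsProjectionOnto K (z + η • g) p) (hx : IsProjectionOnto K (z + η • m) x) (hy : y ∈ K) :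
    ⟪-g, x - y⟫ ≤ η / 2 * ‖g - m‖ ^ 2 + (‖z - y‖ ^ 2 - ‖p - y‖ ^ 2) / (2 * η) := by
  have h := hp.regret_le hx hy
  rw [← smul_sub, ← smul_neg, real_inner_smul_left, norm_smul, mul_pow, Real.norm_eq_abs,
    sq_abs] at h
  refine le_of_mul_le_mul_left (h.trans_eq ?_) hη
  field_simp
  ring

end Projection

theorem sum_Icc_mul_sub_le_of_antitoneOn {R : Type*} [CommRing R] [PartialOrder R]
    [IsOrderedRing R] {T : ℕ} (hT : 1 ≤ T) {c D : ℕ → R} (hc : AntitoneOn c (Set.Icc 1 T))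
    (hD : ∀ t, 0 ≤ D t) :
    ∑ t ∈ Icc 1 T, c t * (D (t - 1) - D t) ≤ c 1 * D 0 - c T * D T := by
  induction T, hT using Nat.le_induction with
  | base => simp [mul_sub]
  | succ k hk ih =>
    have hmono : c (k + 1) ≤ c k := hc ⟨hk, k.le_succ⟩ ⟨by lia, le_rfl⟩ k.le_succ
    calc ∑ t ∈ Icc 1 (k + 1), c t * (D (t - 1) - D t)
        = ∑ t ∈ Icc 1 k, c t * (D (t - 1) - D t) + c (k + 1) * (D k - D (k + 1)) := by
          rw [sum_Icc_succ_top (by lia), Nat.add_sub_cancel]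
      _ ≤ c 1 * D 0 - c k * D k + c (k + 1) * (D k - D (k + 1)) := by
          gcongr
          exact ih (hc.mono (Set.Icc_subset_Icc_right k.le_succ))
      _ = c 1 * D 0 - c (k + 1) * D (k + 1) + (c (k + 1) * D k - c k * D k) := by ring
      _ ≤ c 1 * D 0 - c (k + 1) * D (k + 1) :=
          add_le_of_nonpos_right (sub_nonpos.2 (mul_le_mul_of_nonneg_right hmono (hD k)))

theorem sum_mul_inner_le_of_isProjectionOnto {E : Type*} [SeminormedAddCommGroup E]
    [InnerProductSpace ℝ E] {K : Set E} {T : ℕ} (hT : 1 ≤ T) {c : ℕ → ℝ}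
    (hc : AntitoneOn c (Set.Icc 1 T)) (hcT : 0 ≤ c T) {η : ℝ} (hη : 0 < η) {g m z x : ℕ → E}
    (hz : ∀ t ∈ Icc 1 T, IsProjectionOnto K (z (t - 1) + η • g t) (z t))
    (hx : ∀ t ∈ Icc 1 T, IsProjectionOnto K (z (t - 1) + η • m t) (x t))
    {y : E} (hy : y ∈ K) :
    ∑ t ∈ Icc 1 T, c t * ⟪-g t, x t - y⟫ ≤
      η / 2 * ∑ t ∈ Icc 1 T, c t * ‖g t - m t‖ ^ 2 + 1 / (2 * η) * (c 1 * ‖z 0 - y‖ ^ 2) := by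
  have hc0 : ∀ t ∈ Icc 1 T, 0 ≤ c t := fun t ht =>
    hcT.trans (hc (mem_Icc.1 ht) ⟨hT, le_rfl⟩ (mem_Icc.1 ht).2)
  have telescope : ∑ t ∈ Icc 1 T, c t * (‖z (t - 1) - y‖ ^ 2 - ‖z t - y‖ ^ 2) ≤
      c 1 * ‖z 0 - y‖ ^ 2 :=
    (sum_Icc_mul_sub_le_of_antitoneOn (D := fun t => ‖z t - y‖ ^ 2) hT hc
      fun t => sq_nonneg _).trans (sub_le_self _ (mul_nonneg hcT (sq_nonneg _)))
  calc ∑ t ∈ Icc 1 T, c t * ⟪-g t, x t - y⟫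
      ≤ ∑ t ∈ Icc 1 T, c t * (η / 2 * ‖g t - m t‖ ^ 2 +
          (‖z (t - 1) - y‖ ^ 2 - ‖z t - y‖ ^ 2) / (2 * η)) :=
        sum_le_sum fun t ht => mul_le_mul_of_nonneg_left
          ((hz t ht).regret_smul_le hη (hx t ht) hy) (hc0 t ht)
    _ = η / 2 * ∑ t ∈ Icc 1 T, c t * ‖g t - m t‖ ^ 2 +
          1 / (2 * η) * ∑ t ∈ Icc 1 T, c t * (‖z (t - 1) - y‖ ^ 2 - ‖z t - y‖ ^ 2) := by
        rw [mul_sum, mul_sum, ← sum_add_distrib]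
        exact sum_congr rfl fun t _ => by ring
    _ ≤ _ := by gcongr

theorem dotp_eq_inner_toLp {n : ℕ} (a b : Fin n → ℝ) :
    dotp a b = ⟪WithLp.toLp 2 a, WithLp.toLp 2 b⟫ := by
  simp only [dotp, PiLp.inner_apply, RCLike.inner_apply', conj_trivial]

theorem isProjectionOnto_clipPos {n : ℕ} (a : Fin n → ℝ) :
    IsProjectionOnto {x : EuclideanSpace ℝ (Fin n) | ∀ i, 0 ≤ x i}
      (WithLp.toLp 2 a) (WithLp.toLp 2 (clipPos a)) where
  mem i := le_max_right (a i) 0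
  inner_le_zero y hy := by
    rw [PiLp.inner_apply]
    refine sum_nonpos fun i _ => ?_
    change (y i - max (a i) 0) * (a i - max (a i) 0) ≤ 0
    rcases le_total 0 (a i) with ha | ha
    · rw [max_eq_left ha, sub_self, mul_zero]
    · rw [max_eq_right ha, sub_zero, sub_zero]
      exact mul_nonpos_of_nonneg_of_nonpos (hy i) ha

theorem sum_sq_le_one_of_mem_stdSimplex {𝕜 ι : Type*} [Semiring 𝕜] [PartialOrder 𝕜]
    [IsOrderedRing 𝕜] [Fintype ι] {x : ι → 𝕜} (hx : x ∈ stdSimplex 𝕜 ι) : ∑ i, x i ^ 2 ≤ 1 :=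
  calc ∑ i, x i ^ 2
      ≤ ∑ i, x i := sum_le_sum fun i _ =>
        pow_le_of_le_one (hx.1 i) (mem_Icc_of_mem_stdSimplex hx i).2 two_ne_zero
    _ = 1 := hx.2

theorem stmt10_general (n T : ℕ) (hT : 1 ≤ T)
    (r v : ℕ → Fin n → ℝ) (w τ : ℕ → ℝ)
    (hw : ∀ t ∈ Icc 1 T, 0 < w t) (hτ : ∀ t ∈ Icc 1 T, 0 < τ t)
    (hmono : ∀ t, 1 ≤ t → t < T → τ (t + 1) / w (t + 1) ≤ τ t / w t)
    (η : ℝ) (hη : 0 < η) (z xt : ℕ → Fin n → ℝ)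
    (hzrec : ∀ t ∈ Icc 1 T, z t = clipPos (fun i => z (t - 1) i + η * w t * r t i))
    (hxtrec : ∀ t ∈ Icc 1 T, xt t = clipPos (fun i => z (t - 1) i + η * w t * v t i))
    (x' : Fin n → ℝ) (hx' : ∀ i, 0 ≤ x' i) :
    ∑ t ∈ Icc 1 T, (τ t / w t) * dotp (fun i => -(w t * r t i)) (xt t - x') ≤
      η * ∑ t ∈ Icc 1 T, (τ t / w t) * ∑ i, (w t * r t i - w t * v t i) ^ 2
        + (1 / (2 * η)) * ((τ 1 / w 1) * ∑ i, (z 0 i - x' i) ^ 2) := by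
  have weight_nonneg : ∀ t ∈ Icc 1 T, 0 ≤ τ t / w t := fun t ht =>
    (div_pos (hτ t ht) (hw t ht)).le
  have weight_antitone : AntitoneOn (fun t => τ t / w t) (Set.Icc 1 T) :=
    antitoneOn_of_add_one_le Set.ordConnected_Icc fun t _ ht ht' => hmono t ht.1 ht'.2
  have error_nonneg : 0 ≤ ∑ t ∈ Icc 1 T, (τ t / w t) * ∑ i, (w t * r t i - w t * v t i) ^ 2 :=
    sum_nonneg fun t ht => mul_nonneg (weight_nonneg t ht) (sum_nonneg fun i _ => sq_nonneg _)
  simp only [mul_assoc η] at hzrec hxtrec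
  have regret := sum_mul_inner_le_of_isProjectionOnto
    (K := {x : EuclideanSpace ℝ (Fin n) | ∀ i, 0 ≤ x i})
    hT weight_antitone (weight_nonneg T (by simp [hT])) hη
    (g := fun t => WithLp.toLp 2 fun i => w t * r t i)
    (m := fun t => WithLp.toLp 2 fun i => w t * v t i)
    (z := fun t => WithLp.toLp 2 (z t)) (x := fun t => WithLp.toLp 2 (xt t))
    (fun t ht => hzrec t ht ▸ isProjectionOnto_clipPos _)
    (fun t ht => hxtrec t ht ▸ isProjectionOnto_clipPos _)
    (y := WithLp.toLp 2 x') hx'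
  simp only [EuclideanSpace.real_norm_sq_eq, PiLp.sub_apply, dotp_eq_inner_toLp] at regret ⊢
  refine regret.trans ?_
  gcongr
  exact half_le_self hη.le

/-- The central telescoping weighted regret bound in the proof of Theorem 4:
for the optimistic OMD iterates `z⁰ = 0`, `zᵗ = [zᵗ⁻¹ + η wᵗ rᵗ]⁺`,
`x̃ᵗ = [zᵗ⁻¹ + η wᵗ vᵗ]⁺` with `τᵗ/wᵗ` non-increasing, every `x̃′` in the standard
simplex satisfies
`Σ_t (τᵗ/wᵗ)⟨−wᵗrᵗ, x̃ᵗ − x̃′⟩ ≤ η Σ_t (τᵗ/wᵗ)‖wᵗrᵗ − wᵗvᵗ‖₂² + (1/(2η))(τ¹/w¹)`. -/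
theorem stmt10 (n T : ℕ) (hT : 1 ≤ T)
    (r v : ℕ → Fin n → ℝ) (w τ : ℕ → ℝ)
    (hw : ∀ t ∈ Icc 1 T, 0 < w t) (hτ : ∀ t ∈ Icc 1 T, 0 < τ t)
    (hmono : ∀ t, 1 ≤ t → t < T → τ (t + 1) / w (t + 1) ≤ τ t / w t)
    (η : ℝ) (hη : 0 < η)
    (z xt : ℕ → Fin n → ℝ) (hz0 : z 0 = 0)
    (hzrec : ∀ t ∈ Icc 1 T, z t = clipPos (fun i => z (t - 1) i + η * w t * r t i))
    (hxtrec : ∀ t ∈ Icc 1 T, xt t = clipPos (fun i => z (t - 1) i + η * w t * v t i)) :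
    ∀ x' ∈ stdSimplex ℝ (Fin n),
      ∑ t ∈ Icc 1 T, (τ t / w t) * dotp (fun i => -(w t * r t i)) (xt t - x') ≤
        η * ∑ t ∈ Icc 1 T, (τ t / w t) * ∑ i, (w t * r t i - w t * v t i) ^ 2
          + (1 / (2 * η)) * (τ 1 / w 1) := by
  intro x' hx'
  have hweight : 0 ≤ τ 1 / w 1 := (div_pos (hτ 1 (by simp [hT])) (hw 1 (by simp [hT]))).le
  refine (stmt10_general n T hT r v w τ hw hτ hmono η hη z xt hzrec hxtrec x' hx'.1).trans ?_
  gcongr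
  exact mul_le_of_le_one_right hweight (by simpa [hz0] using sum_sq_le_one_of_mem_stdSimplex hx')
end

section
/- Let T ≥ 1, let ℓ¹, …, ℓᵀ ∈ ℝ^n, let v¹, …, vᵀ ∈ ℝ^n be arbitrary prediction vectors, and let w¹, …, wᵀ > 0 and τ¹, …, τᵀ > 0 be such that the sequence t ↦ τ^t/w^t is non-increasing. Run PWCFR+: set R⁰ = 0 ∈ ℝ^n and, for 1 ≤ t ≤ T, R̃^t = [R^{t−1} + w^t v^t]⁺, x^t = N(R̃^t), r^t = ⟨ℓ^t, x^t⟩·𝟏 − ℓ^t, and R^t = [R^{t−1} + w^t r^t]⁺. Then the total weighted regret satisfies max_{x′ ∈ Δ^n} Σ_{t=1}^T τ^t ⟨ℓ^t, x^t − x′⟩ ≤ √( 2·(τ¹/w¹) · Σ_{t=1}^T τ^t w^t ‖r^t − v^t‖₂² ). -/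
open Finset
open scoped Classical

/-- Normalization `N(v) = v / ‖v‖₁`, with `N(0)` the uniform distribution. -/
noncomputable def nmz {n : ℕ} (v : Fin n → ℝ) : Fin n → ℝ :=
  if v = 0 then (fun _ => (1 : ℝ) / n) else fun i => v i / ∑ j, |v j|

/-!
Write `αₜ = τₜ / wₜ`. Along the run, `⟨Rₜ, x'⟩` grows by at least `wₜ ⟨ℓₜ, xₜ - x'⟩`, because `Rₜ`
dominates `Rₜ₋₁ + wₜ rₜ`, while `‖Rₜ‖²` grows by at most `wₜ² ‖rₜ - vₜ‖²`, because `rₜ` is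
orthogonal to the predicted regret `R̃ₜ`. Summation by parts writes
`∑ αₜ (⟨Rₜ, x'⟩ - ⟨Rₜ₋₁, x'⟩)` as a combination of the numbers `⟨Rₜ, x'⟩ ≤ ‖Rₜ‖` with nonnegative
weights `αₜ - αₜ₊₁` (where `α_{T+1} = 0`) of total mass `α₁`, so by Cauchy–Schwarz its square is
at most `α₁ ∑ αₜ (‖Rₜ‖² - ‖Rₜ₋₁‖²)`. This gives the bound even without the factor `2`.
-/

section SummationByParts

lemma sum_Icc_mul_sub_eq {𝕜 : Type*} [CommRing 𝕜] (α : ℕ → 𝕜) {c : ℕ → 𝕜} (hc : c 0 = 0) (T : ℕ) :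
    ∑ t ∈ Icc 1 T, α t * (c t - c (t - 1)) =
      ∑ t ∈ Icc 1 T, (α t - α (t + 1)) * c t + α (T + 1) * c T := by
  induction T with
  | zero => simp [hc]
  | succ T ih =>
    rw [sum_Icc_succ_top (by omega), sum_Icc_succ_top (by omega), ih, Nat.add_sub_cancel]
    ring

lemma sum_Icc_sub_succ {M : Type*} [AddCommGroup M] (α : ℕ → M) (T : ℕ) :
    ∑ t ∈ Icc 1 T, (α t - α (t + 1)) = α 1 - α (T + 1) := by
  induction T with
  | zero => simp
  | succ T ih => rw [sum_Icc_succ_top (by omega), ih, sub_add_sub_cancel]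

variable {𝕜 : Type*} [CommRing 𝕜] [LinearOrder 𝕜] [IsStrictOrderedRing 𝕜] {T : ℕ} {α a b : ℕ → 𝕜}

lemma sq_sum_Icc_mul_sub_le_of_eq_zero (hα : ∀ t ∈ Icc 1 T, α (t + 1) ≤ α t)
    (hαT : α (T + 1) = 0) (ha : a 0 = 0) (hb : b 0 = 0) (hab : ∀ t ∈ Icc 1 T, a t ^ 2 ≤ b t) :
    (∑ t ∈ Icc 1 T, α t * (a t - a (t - 1))) ^ 2 ≤
      α 1 * ∑ t ∈ Icc 1 T, α t * (b t - b (t - 1)) := by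
  have hmass : ∑ t ∈ Icc 1 T, (α t - α (t + 1)) = α 1 := by
    rw [sum_Icc_sub_succ, hαT, sub_zero]
  have hweight : ∀ t ∈ Icc 1 T, 0 ≤ α t - α (t + 1) := fun t ht => sub_nonneg.2 (hα t ht)
  rw [sum_Icc_mul_sub_eq α ha, sum_Icc_mul_sub_eq α hb, hαT, zero_mul, zero_mul, add_zero,
    add_zero, ← hmass]
  refine sum_sq_le_sum_mul_sum_of_sq_le_mul _ hweight
    (fun t ht => mul_nonneg (hweight t ht) ((sq_nonneg _).trans (hab t ht))) fun t ht => ?_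
  calc ((α t - α (t + 1)) * a t) ^ 2 = (α t - α (t + 1)) ^ 2 * a t ^ 2 := mul_pow _ _ _
    _ ≤ (α t - α (t + 1)) ^ 2 * b t := mul_le_mul_of_nonneg_left (hab t ht) (sq_nonneg _)
    _ = (α t - α (t + 1)) * ((α t - α (t + 1)) * b t) := by rw [sq, mul_assoc]

lemma sq_sum_Icc_mul_sub_le (hα : ∀ t, 1 ≤ t → t < T → α (t + 1) ≤ α t)
    (hα₀ : ∀ t ∈ Icc 1 T, 0 ≤ α t) (ha : a 0 = 0) (hb : b 0 = 0)
    (hab : ∀ t ∈ Icc 1 T, a t ^ 2 ≤ b t) :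
    (∑ t ∈ Icc 1 T, α t * (a t - a (t - 1))) ^ 2 ≤
      α 1 * ∑ t ∈ Icc 1 T, α t * (b t - b (t - 1)) := by
  rcases T.eq_zero_or_pos with rfl | hT
  · simp
  -- Zeroing the weight after `T` removes the boundary term of the summation by parts.
  set β := Function.update α (T + 1) 0
  have hβ : ∀ t ∈ Icc 1 T, β t = α t := fun t ht =>
    Function.update_of_ne (by have := mem_Icc.1 ht; omega) _ _
  have hβT : β (T + 1) = 0 := Function.update_self ..
  have hβ_anti : ∀ t ∈ Icc 1 T, β (t + 1) ≤ β t := fun t ht => by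
    obtain ⟨h1t, htT⟩ := mem_Icc.1 ht
    rcases htT.eq_or_lt with rfl | htT
    · exact hβT.trans_le ((hα₀ t ht).trans_eq (hβ t ht).symm)
    · rw [hβ t ht, hβ (t + 1) (mem_Icc.2 ⟨by omega, htT⟩)]
      exact hα t h1t htT
  have hsum : ∀ c : ℕ → 𝕜, ∑ t ∈ Icc 1 T, α t * c t = ∑ t ∈ Icc 1 T, β t * c t :=
    fun c => sum_congr rfl fun t ht => by rw [hβ t ht]
  rw [hsum, hsum, ← hβ 1 (mem_Icc.2 ⟨le_rfl, hT⟩)]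
  exact sq_sum_Icc_mul_sub_le_of_eq_zero hβ_anti hβT ha hb hab

end SummationByParts

section Vectors

variable {𝕜 ι : Type*} [CommRing 𝕜] [LinearOrder 𝕜] [IsStrictOrderedRing 𝕜]

lemma sq_posPart_add_le (a r v : 𝕜) :
    (a + r)⁺ ^ 2 ≤ a ^ 2 + 2 * (r * (a + v)⁺) + (r - v) ^ 2 := by
  set q := (a + v)⁺ with hq
  have hsq : q * (a + v) = q ^ 2 := by
    rcases le_total 0 (a + v) with h | h
    · rw [hq, posPart_of_nonneg h, sq]
    · simp [hq, posPart_of_nonpos h]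
  have hle : (a + r)⁺ ≤ |q + (r - v)| :=
    sup_le ((by linarith [le_posPart (a + v)] : a + r ≤ q + (r - v)).trans (le_abs_self _))
      (abs_nonneg _)
  calc (a + r)⁺ ^ 2 ≤ (q + (r - v)) ^ 2 := sq_le_sq.2 (by rwa [abs_of_nonneg (posPart_nonneg _)])
    _ = a ^ 2 + 2 * (r * q) + (r - v) ^ 2 - (q - a) ^ 2 := by linear_combination -2 * hsq
    _ ≤ a ^ 2 + 2 * (r * q) + (r - v) ^ 2 := sub_le_self _ (sq_nonneg _)

variable [Fintype ι]

lemma sum_sq_posPart_add_le_of_dotProduct_eq_zero {a r v : ι → 𝕜} (h : r ⬝ᵥ (a + v)⁺ = 0) :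
    ∑ i, (a + r)⁺ i ^ 2 ≤ ∑ i, a i ^ 2 + ∑ i, (r i - v i) ^ 2 :=
  calc ∑ i, (a + r)⁺ i ^ 2
      ≤ ∑ i, (a i ^ 2 + 2 * (r i * (a + v)⁺ i) + (r i - v i) ^ 2) :=
        sum_le_sum fun i _ => sq_posPart_add_le (a i) (r i) (v i)
    _ = ∑ i, a i ^ 2 + 2 * (r ⬝ᵥ (a + v)⁺) + ∑ i, (r i - v i) ^ 2 := by
        rw [sum_add_distrib, sum_add_distrib, ← mul_sum, dotProduct]
    _ = ∑ i, a i ^ 2 + ∑ i, (r i - v i) ^ 2 := by rw [h, mul_zero, add_zero]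

lemma sq_dotProduct_le_sum_sq_of_mem_stdSimplex (u : ι → 𝕜) {y : ι → 𝕜}
    (hy : y ∈ stdSimplex 𝕜 ι) : (u ⬝ᵥ y) ^ 2 ≤ ∑ i, u i ^ 2 := by
  have h : (u ⬝ᵥ y) ^ 2 ≤ (∑ i, y i) * ∑ i, u i ^ 2 := by
    refine sum_sq_le_sum_mul_sum_of_sq_le_mul _ (fun i _ => hy.1 i) (fun i _ => sq_nonneg _)
      fun i _ => ?_
    have hyi := mem_Icc_of_mem_stdSimplex hy i
    rw [mul_pow, mul_comm]
    exact mul_le_mul_of_nonneg_right (pow_le_of_le_one hyi.1 hyi.2 two_ne_zero) (sq_nonneg _)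
  rwa [hy.2, one_mul] at h

end Vectors

section Regret

variable {𝕜 ι : Type*} [CommRing 𝕜] [Fintype ι]

/-- The instantaneous regret `⟨ℓ, x⟩·𝟏 − ℓ` of the strategy `x` against the loss `ℓ`: its `i`-th
coordinate is what would have been saved by playing the pure action `i`. -/
def instRegret (ℓ x : ι → 𝕜) : ι → 𝕜 := fun i => ℓ ⬝ᵥ x - ℓ i

lemma instRegret_dotProduct (ℓ x y : ι → 𝕜) :
    instRegret ℓ x ⬝ᵥ y = (ℓ ⬝ᵥ x) * ∑ i, y i - ℓ ⬝ᵥ y := by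
  simp only [dotProduct, instRegret, sub_mul, sum_sub_distrib, mul_sum]

lemma instRegret_dotProduct_eq_zero {ℓ x u : ι → 𝕜} (hx : (∑ i, u i) • x = u) :
    instRegret ℓ x ⬝ᵥ u = 0 := by
  have h : ℓ ⬝ᵥ u = (∑ i, u i) * (ℓ ⬝ᵥ x) := by
    rw [← smul_eq_mul, ← dotProduct_smul, hx]
  rw [instRegret_dotProduct, h, mul_comm, sub_self]

lemma instRegret_dotProduct_of_sum_eq_one (ℓ x : ι → 𝕜) {y : ι → 𝕜} (hy : ∑ i, y i = 1) :
    instRegret ℓ x ⬝ᵥ y = ℓ ⬝ᵥ (x - y) := by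
  rw [instRegret_dotProduct, hy, mul_one, dotProduct_sub]

variable [LinearOrder 𝕜] [IsStrictOrderedRing 𝕜]

lemma mul_dotProduct_sub_le_posPart_sub (ℓ x R : ι → 𝕜) (w : 𝕜) {y : ι → 𝕜}
    (hy : y ∈ stdSimplex 𝕜 ι) :
    w * (ℓ ⬝ᵥ (x - y)) ≤ (R + w • instRegret ℓ x)⁺ ⬝ᵥ y - R ⬝ᵥ y := by
  rw [← instRegret_dotProduct_of_sum_eq_one ℓ x hy.2, le_sub_iff_add_le', ← smul_eq_mul,
    ← smul_dotProduct, ← add_dotProduct]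
  exact dotProduct_le_dotProduct_of_nonneg_right (le_posPart _) hy.1

lemma sum_sq_posPart_sub_le (ℓ : ι → 𝕜) {x R v : ι → 𝕜} {w : 𝕜}
    (hx : (∑ i, (R + w • v)⁺ i) • x = (R + w • v)⁺) :
    ∑ i, (R + w • instRegret ℓ x)⁺ i ^ 2 - ∑ i, R i ^ 2 ≤
      w ^ 2 * ∑ i, (instRegret ℓ x i - v i) ^ 2 := by
  have horth : w • instRegret ℓ x ⬝ᵥ (R + w • v)⁺ = 0 := by
    rw [smul_dotProduct, instRegret_dotProduct_eq_zero hx, smul_zero]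
  have h := sum_sq_posPart_add_le_of_dotProduct_eq_zero horth
  simp only [Pi.smul_apply, smul_eq_mul, ← mul_sub, mul_pow, ← mul_sum] at h
  exact sub_le_iff_le_add'.2 h

end Regret

lemma sum_smul_nmz {n : ℕ} {u : Fin n → ℝ} (hu : 0 ≤ u) : (∑ i, u i) • nmz u = u := by
  by_cases h : u = 0
  · simp [h]
  have hsum : ∑ i, u i ≠ 0 := fun h0 => h ((Fintype.sum_eq_zero_iff_of_nonneg hu).1 h0)
  have habs : ∑ j, |u j| = ∑ j, u j := sum_congr rfl fun j _ => abs_of_nonneg (hu j)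
  ext i
  simp only [nmz, if_neg h, habs, Pi.smul_apply, smul_eq_mul, mul_div_cancel₀ _ hsum]

-- `hx` encodes `x t = N(Rt t)` with an arbitrary choice of `N(0)`.
theorem stmt12_general {ι : Type*} [Fintype ι] {T : ℕ} {ℓ v R Rt x r : ℕ → ι → ℝ} {w τ : ℕ → ℝ}
    (hw : ∀ t ∈ Icc 1 T, 0 < w t) (hτ : ∀ t ∈ Icc 1 T, 0 ≤ τ t)
    (hmono : ∀ t, 1 ≤ t → t < T → τ (t + 1) / w (t + 1) ≤ τ t / w t)
    (hR0 : R 0 = 0)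
    (hRt : ∀ t ∈ Icc 1 T, Rt t = (R (t - 1) + w t • v t)⁺)
    (hx : ∀ t ∈ Icc 1 T, (∑ i, Rt t i) • x t = Rt t)
    (hr : ∀ t ∈ Icc 1 T, r t = instRegret (ℓ t) (x t))
    (hR : ∀ t ∈ Icc 1 T, R t = (R (t - 1) + w t • r t)⁺)
    {x' : ι → ℝ} (hx' : x' ∈ stdSimplex ℝ ι) :
    ∑ t ∈ Icc 1 T, τ t * (ℓ t ⬝ᵥ (x t - x')) ≤
      √(τ 1 / w 1 * ∑ t ∈ Icc 1 T, τ t * w t * ∑ i, (r t i - v t i) ^ 2) := by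
  rcases T.eq_zero_or_pos with rfl | hT
  · simp
  have hα : ∀ t ∈ Icc 1 T, 0 ≤ τ t / w t := fun t ht => div_nonneg (hτ t ht) (hw t ht).le
  have hτ_eq : ∀ t ∈ Icc 1 T, τ t = τ t / w t * w t := fun t ht =>
    (div_mul_cancel₀ _ (hw t ht).ne').symm
  have hregret : ∑ t ∈ Icc 1 T, τ t * (ℓ t ⬝ᵥ (x t - x')) ≤
      ∑ t ∈ Icc 1 T, τ t / w t * (R t ⬝ᵥ x' - R (t - 1) ⬝ᵥ x') := sum_le_sum fun t ht => by
    conv_lhs => rw [hτ_eq t ht, mul_assoc]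
    rw [hR t ht, hr t ht]
    exact mul_le_mul_of_nonneg_left (mul_dotProduct_sub_le_posPart_sub _ _ _ _ hx')
      (hα t ht)
  have hpotential : ∑ t ∈ Icc 1 T, τ t / w t * (∑ i, R t i ^ 2 - ∑ i, R (t - 1) i ^ 2) ≤
      ∑ t ∈ Icc 1 T, τ t * w t * ∑ i, (r t i - v t i) ^ 2 := sum_le_sum fun t ht => by
    conv_rhs => rw [hτ_eq t ht, mul_assoc, mul_assoc, ← mul_assoc (w t), ← sq]
    rw [hR t ht, hr t ht]
    exact mul_le_mul_of_nonneg_left (sum_sq_posPart_sub_le _ (hRt t ht ▸ hx t ht)) (hα t ht)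
  refine hregret.trans (Real.le_sqrt_of_sq_le ?_)
  calc (∑ t ∈ Icc 1 T, τ t / w t * (R t ⬝ᵥ x' - R (t - 1) ⬝ᵥ x')) ^ 2
      ≤ τ 1 / w 1 * ∑ t ∈ Icc 1 T, τ t / w t * (∑ i, R t i ^ 2 - ∑ i, R (t - 1) i ^ 2) :=
        sq_sum_Icc_mul_sub_le (a := fun t => R t ⬝ᵥ x') (b := fun t => ∑ i, R t i ^ 2) hmono hα
          (by simp [hR0]) (by simp [hR0])
          fun t _ => sq_dotProduct_le_sum_sq_of_mem_stdSimplex (R t) hx'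
    _ ≤ τ 1 / w 1 * ∑ t ∈ Icc 1 T, τ t * w t * ∑ i, (r t i - v t i) ^ 2 :=
        mul_le_mul_of_nonneg_left hpotential (hα 1 (mem_Icc.2 ⟨le_rfl, hT⟩))

/-- The per-decision-node weighted counterfactual regret bound of PWCFR+ (from the proof
of Theorem 4): running `R⁰ = 0`, `R̃ᵗ = [Rᵗ⁻¹ + wᵗvᵗ]⁺`, `xᵗ = N(R̃ᵗ)`,
`rᵗ = ⟨ℓᵗ, xᵗ⟩·𝟏 − ℓᵗ`, `Rᵗ = [Rᵗ⁻¹ + wᵗrᵗ]⁺` with `τᵗ/wᵗ` non-increasing gives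
`max_{x′∈Δⁿ} Σ_t τᵗ⟨ℓᵗ, xᵗ − x′⟩ ≤ √(2(τ¹/w¹)·Σ_t τᵗwᵗ‖rᵗ − vᵗ‖₂²)`. -/
theorem stmt12 (n T : ℕ) (hn : 0 < n) (hT : 1 ≤ T)
    (ℓ v : ℕ → Fin n → ℝ) (w τ : ℕ → ℝ)
    (hw : ∀ t ∈ Icc 1 T, 0 < w t) (hτ : ∀ t ∈ Icc 1 T, 0 < τ t)
    (hmono : ∀ t, 1 ≤ t → t < T → τ (t + 1) / w (t + 1) ≤ τ t / w t)
    (R Rt x r : ℕ → Fin n → ℝ)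
    (hR0 : R 0 = 0)
    (hRt : ∀ t ∈ Icc 1 T, Rt t = clipPos (fun i => R (t - 1) i + w t * v t i))
    (hx : ∀ t ∈ Icc 1 T, x t = nmz (Rt t))
    (hr : ∀ t ∈ Icc 1 T, r t = fun i => dotp (ℓ t) (x t) - ℓ t i)
    (hR : ∀ t ∈ Icc 1 T, R t = clipPos (fun i => R (t - 1) i + w t * r t i)) :
    ∀ x' ∈ stdSimplex ℝ (Fin n),
      ∑ t ∈ Icc 1 T, τ t * dotp (ℓ t) (x t - x') ≤
        Real.sqrt (2 * (τ 1 / w 1)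
          * ∑ t ∈ Icc 1 T, τ t * w t * ∑ i, (r t i - v t i) ^ 2) := by
  intro x' hx'
  have hx_sum : ∀ t ∈ Icc 1 T, (∑ i, Rt t i) • x t = Rt t := fun t ht => by
    rw [hx t ht]
    exact sum_smul_nmz (hRt t ht ▸ fun i => le_max_right _ _)
  refine (stmt12_general hw (fun t ht => (hτ t ht).le) hmono hR0 hRt hx_sum hr hR hx').trans ?_
  rw [mul_assoc, Real.sqrt_mul zero_le_two]
  exact le_mul_of_one_le_left (Real.sqrt_nonneg _) (Real.one_le_sqrt.2 one_le_two)
end
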